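/- Let H be a real Hilbert space, A : H → Set H monotone, D : H → H monotone and (1/η)-Lipschitz (η > 0), B : H → H monotone and (1/μ)-Lipschitz (μ > 0). Fix ε > 0, β > 0, λ > 0 and set V(x) := D x + ε x + β B x. Let x̄ ∈ H satisfy −V(x̄) ∈ A(x̄), let x ∈ H, and let p ∈ H satisfy p + λ a = x − λ V(x) for some a ∈ A(p). Then ‖x − x̄‖ ≤ (2 + 1/(λε) + 1/(ηε) + β/(με)) · ‖x − p‖. -/

import Mathlib

open scoped RealInnerProductSpace

/-!
The point `p` is an approximate zero of `A + V`: when `V` is `K`-Lipschitz, the residual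
`a + V p = λ⁻¹ (x - p) - (V x - V p)` in `(A + V) p` has norm at most `(λ⁻¹ + K) ‖x - p‖`. As `V`
is strongly monotone with modulus `m`, so is `A + V`, hence `m` times the distance from `p` to the
zero `x̄` of `A + V` is at most the norm of that residual. The triangle inequality through `p` then
bounds the distance from `x` to `x̄`.
-/

section Seminormed

variable {H : Type*} [SeminormedAddCommGroup H] [InnerProductSpace ℝ H]

/-- Monotonicity of a set-valued operator, used for the operator `A` of the inclusion. -/
def IsMonotoneOperator (A : H → Set H) : Prop :=
  ∀ ⦃x y u v : H⦄, u ∈ A x → v ∈ A y → 0 ≤ ⟪u - v, x - y⟫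

/-- Strong monotonicity of a single-valued operator with modulus `m`, used for the Lipschitz part of
the inclusion. The modulus may be any real number, so `m = 0` encodes monotonicity. -/
def IsStronglyMonotone (m : ℝ) (V : H → H) : Prop :=
  ∀ x y : H, m * ‖x - y‖ ^ 2 ≤ ⟪V x - V y, x - y⟫

theorem isStronglyMonotone_zero_iff {V : H → H} :
    IsStronglyMonotone 0 V ↔ ∀ x y : H, 0 ≤ ⟪V x - V y, x - y⟫ := by
  simp only [IsStronglyMonotone, zero_mul]

theorem isStronglyMonotone_smul (c : ℝ) : IsStronglyMonotone c fun x : H ↦ c • x := fun x y ↦ by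
  rw [← smul_sub, real_inner_smul_left, real_inner_self_eq_norm_sq]

theorem IsStronglyMonotone.add {m n : ℝ} {V W : H → H} (hV : IsStronglyMonotone m V)
    (hW : IsStronglyMonotone n W) : IsStronglyMonotone (m + n) fun x ↦ V x + W x := fun x y ↦ by
  rw [add_sub_add_comm, inner_add_left, add_mul]
  exact add_le_add (hV x y) (hW x y)

theorem IsStronglyMonotone.const_smul {m c : ℝ} {V : H → H} (hV : IsStronglyMonotone m V)
    (hc : 0 ≤ c) : IsStronglyMonotone (c * m) fun x ↦ c • V x := fun x y ↦ by
  rw [← smul_sub, real_inner_smul_left, mul_assoc]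
  exact mul_le_mul_of_nonneg_left (hV x y) hc

theorem mul_norm_le_norm_of_mul_norm_sq_le_inner {m : ℝ} {w z : H} (h : m * ‖z‖ ^ 2 ≤ ⟪w, z⟫) :
    m * ‖z‖ ≤ ‖w‖ := by
  rcases (norm_nonneg z).eq_or_lt with hz | hz
  · simp only [← hz, mul_zero, norm_nonneg]
  · refine le_of_mul_le_mul_right ?_ hz
    calc m * ‖z‖ * ‖z‖ = m * ‖z‖ ^ 2 := by ring
      _ ≤ ⟪w, z⟫ := h
      _ ≤ ‖w‖ * ‖z‖ := real_inner_le_norm w z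

theorem IsStronglyMonotone.mul_norm_sub_le_norm_add {m : ℝ} {A : H → Set H} {V : H → H}
    (hV : IsStronglyMonotone m V) (hA : IsMonotoneOperator A) {xbar p a : H}
    (hxbar : -V xbar ∈ A xbar) (ha : a ∈ A p) : m * ‖p - xbar‖ ≤ ‖a + V p‖ := by
  apply mul_norm_le_norm_of_mul_norm_sq_le_inner
  calc m * ‖p - xbar‖ ^ 2
      ≤ ⟪a - -V xbar, p - xbar⟫ + ⟪V p - V xbar, p - xbar⟫ :=
        (hV p xbar).trans (le_add_of_nonneg_left (hA ha hxbar))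
    _ = ⟪a + V p, p - xbar⟫ := by
        rw [← inner_add_left]
        congr 1
        abel

theorem add_eq_inv_smul_sub_of_forward_backward {E : Type*} [AddCommGroup E] {𝕜 : Type*}
    [DivisionRing 𝕜] [Module 𝕜 E] {V : E → E} {lam : 𝕜} (hlam : lam ≠ 0) {x p a : E}
    (hp : p + lam • a = x - lam • V x) : a + V p = lam⁻¹ • (x - p) - (V x - V p) := by
  have h : x - p = lam • (a + V x) := by
    rw [smul_add, sub_eq_iff_eq_add, ← sub_eq_iff_eq_add.mpr hp.symm]
    abel
  rw [h, inv_smul_smul₀ hlam]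
  abel

theorem norm_add_le_of_forward_backward {K : NNReal} {V : H → H} (hV : LipschitzWith K V) {lam : ℝ}
    (hlam : 0 < lam) {x p a : H} (hp : p + lam • a = x - lam • V x) :
    ‖a + V p‖ ≤ (1 / lam + K) * ‖x - p‖ :=
  calc ‖a + V p‖ = ‖lam⁻¹ • (x - p) - (V x - V p)‖ := by
        rw [add_eq_inv_smul_sub_of_forward_backward hlam.ne' hp]
    _ ≤ ‖lam⁻¹ • (x - p)‖ + ‖V x - V p‖ := norm_sub_le _ _
    _ ≤ 1 / lam * ‖x - p‖ + K * ‖x - p‖ := by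
        rw [norm_smul, Real.norm_of_nonneg (inv_nonneg.mpr hlam.le), one_div]
        gcongr
        exact hV.norm_sub_le x p
    _ = (1 / lam + K) * ‖x - p‖ := by ring

theorem distance_controlled_by_residual_general {m lam : ℝ} (hm : 0 < m) (hlam : 0 < lam)
    {K : NNReal} {A : H → Set H} {V : H → H} (hA : IsMonotoneOperator A)
    (hVmono : IsStronglyMonotone m V) (hVlip : LipschitzWith K V) {xbar x p a : H}
    (hxbar : -V xbar ∈ A xbar) (ha : a ∈ A p) (hp : p + lam • a = x - lam • V x) :
    ‖x - xbar‖ ≤ (1 + (1 / lam + K) / m) * ‖x - p‖ := by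
  have hzero : m * ‖p - xbar‖ ≤ (1 / lam + K) * ‖x - p‖ :=
    (hVmono.mul_norm_sub_le_norm_add hA hxbar ha).trans
      (norm_add_le_of_forward_backward hVlip hlam hp)
  calc ‖x - xbar‖ ≤ ‖x - p‖ + ‖p - xbar‖ := norm_sub_le_norm_sub_add_norm_sub x p xbar
    _ ≤ ‖x - p‖ + (1 / lam + K) * ‖x - p‖ / m := by
        gcongr
        exact (le_div_iff₀' hm).mpr hzero
    _ = (1 + (1 / lam + K) / m) * ‖x - p‖ := by ring

/-- The single-valued operator `V = D + ε I + β B` of the regularized inclusion `0 ∈ A x + V x`. -/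
def regularizedOperator (D B : H → H) (ε β : ℝ) (x : H) : H :=
  D x + ε • x + β • B x

theorem IsStronglyMonotone.regularizedOperator {m n ε β : ℝ} {D B : H → H}
    (hD : IsStronglyMonotone m D) (hB : IsStronglyMonotone n B) (hβ : 0 ≤ β) :
    IsStronglyMonotone (m + ε + β * n) (regularizedOperator D B ε β) :=
  (hD.add (isStronglyMonotone_smul ε)).add (hB.const_smul hβ)

theorem lipschitzWith_regularizedOperator {K L : NNReal} {D B : H → H} (hD : LipschitzWith K D)
    (hB : LipschitzWith L B) (ε β : ℝ) :
    LipschitzWith (K + ‖ε‖₊ + ‖β‖₊ * L) (regularizedOperator D B ε β) :=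
  (hD.add (lipschitzWith_smul ε)).add ((lipschitzWith_smul β).comp hB)

end Seminormed

/-- distance to the regularized solution is controlled by the
fixed-point residual: `‖x − x̄‖ ≤ (2 + 1/(λε) + 1/(ηε) + β/(με))‖x − p‖`. -/
theorem distance_controlled_by_residual
    {H : Type*} [NormedAddCommGroup H] [InnerProductSpace ℝ H]
    (A : H → Set H) (D B : H → H) (η μ : ℝ) (hη : 0 < η) (hμ : 0 < μ)
    (hAmono : ∀ ⦃x y u v : H⦄, u ∈ A x → v ∈ A y → (0:ℝ) ≤ ⟪u - v, x - y⟫)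
    (hDmono : ∀ x y : H, (0:ℝ) ≤ ⟪D x - D y, x - y⟫)
    (hDlip : ∀ x y : H, ‖D x - D y‖ ≤ (1/η) * ‖x - y‖)
    (hBmono : ∀ x y : H, (0:ℝ) ≤ ⟪B x - B y, x - y⟫)
    (hBlip : ∀ x y : H, ‖B x - B y‖ ≤ (1/μ) * ‖x - y‖)
    (ε β lam : ℝ) (hε : 0 < ε) (hβ : 0 < β) (hlam : 0 < lam)
    (xbar : H) (hxbar : -(D xbar + ε • xbar + β • B xbar) ∈ A xbar)
    (x p a : H) (ha : a ∈ A p)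
    (hp : p + lam • a = x - lam • (D x + ε • x + β • B x)) :
    ‖x - xbar‖ ≤ (2 + 1/(lam * ε) + 1/(η * ε) + β/(μ * ε)) * ‖x - p‖ := by
  have hVmono : IsStronglyMonotone ε (regularizedOperator D B ε β) := by
    simpa only [zero_add, mul_zero, add_zero] using
      (isStronglyMonotone_zero_iff.mpr hDmono).regularizedOperator
        (isStronglyMonotone_zero_iff.mpr hBmono) hβ.le
  have hDlip' : LipschitzWith (1 / η).toNNReal D := .of_dist_le' (by simpa only [dist_eq_norm])
  have hBlip' : LipschitzWith (1 / μ).toNNReal B := .of_dist_le' (by simpa only [dist_eq_norm])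
  have hVlip := lipschitzWith_regularizedOperator hDlip' hBlip' ε β
  convert distance_controlled_by_residual_general hε hlam hAmono hVmono hVlip hxbar ha hp using 2
  push_cast
  rw [Real.coe_toNNReal _ (by positivity), Real.coe_toNNReal _ (by positivity),
    Real.norm_of_nonneg hε.le, Real.norm_of_nonneg hβ.le]
  field_simp
  ring
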